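/- Incoherence of the random Walsh–Hadamard rotation (the key concentration step behind Proposition 1, part 2): let d ≥ 1, let H be a d × d real matrix all of whose entries have absolute value 1/√d, let w : Fin d → ℝ, and let δ ∈ (0, 1]. Then the number of sign patterns r : Fin d → Bool such that for every coordinate j, |(H.mulVec (fun i => σ(r) i * w i)) j| ≤ Real.sqrt (2 · Real.log (4·d/δ) / d) · Real.sqrt (∑_i (w i)²) is at least (1 − δ) · 2^d. -/

import Mathlib

/-!
Each coordinate of the rotated vector is a Rademacher sum `∑ i, σ i * a i` with
`∑ i, a i ^ 2 = ‖w‖ ^ 2 / d`. Its exponential moments factor over the independent signs into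
hyperbolic cosines, and `cosh x ≤ exp (x ^ 2 / 2)` makes the sum sub-Gaussian
(`sum_exp_signVec_le`). Markov's inequality gives the two-sided Hoeffding tail bound
`card_signVec_tail_le`. At `L = log (4 d / δ)` each coordinate is bad for a fraction at most
`δ / (2 d)` of the sign patterns, so a union bound over the `d` coordinates finishes the proof
with a factor `2` to spare.
-/

open Matrix Finset

/-- The sign vector associated with a Boolean pattern. -/
def signVec {d : ℕ} (r : Fin d → Bool) : Fin d → ℝ :=
  fun i => if r i then (1 : ℝ) else -1

/-- Sub-Gaussian bound on the (unnormalised) moment generating function of a Rademacher sum. -/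
lemma sum_exp_signVec_le {d : ℕ} (a : Fin d → ℝ) (c : ℝ) :
    ∑ r : Fin d → Bool, Real.exp (c * ∑ i, signVec r i * a i)
      ≤ 2 ^ d * Real.exp (c ^ 2 * (∑ i, a i ^ 2) / 2) := by
  have factor : ∑ r : Fin d → Bool, Real.exp (c * ∑ i, signVec r i * a i)
      = ∏ i, (2 * Real.cosh (c * a i)) := by
    have h := Fintype.prod_sum
      (fun (i : Fin d) (b : Bool) => Real.exp (c * ((if b then (1 : ℝ) else -1) * a i)))
    calc ∑ r : Fin d → Bool, Real.exp (c * ∑ i, signVec r i * a i)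
        = ∑ r : Fin d → Bool, ∏ i, Real.exp (c * ((if r i then (1 : ℝ) else -1) * a i)) := by
          simp only [Finset.mul_sum, Real.exp_sum, signVec]
      _ = ∏ i, (2 * Real.cosh (c * a i)) := by
          rw [← h]
          refine Finset.prod_congr rfl fun i _ => ?_
          rw [Real.cosh_eq]
          simp
          ring
  rw [factor]
  calc ∏ i, (2 * Real.cosh (c * a i))
      ≤ ∏ i, (2 * Real.exp ((c * a i) ^ 2 / 2)) := by
        refine Finset.prod_le_prod (fun i _ => ?_) fun i _ => ?_
        · have := Real.cosh_pos (c * a i)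
          positivity
        · have := Real.cosh_le_exp_half_sq (c * a i)
          linarith
    _ = 2 ^ d * Real.exp (c ^ 2 * (∑ i, a i ^ 2) / 2) := by
        rw [Finset.prod_mul_distrib, ← Real.exp_sum, Finset.mul_sum, Finset.sum_div]
        simp [mul_pow]

/-- Hoeffding's two-sided tail bound for Rademacher sums, as a count of sign patterns. -/
lemma card_signVec_tail_le {d : ℕ} (a : Fin d → ℝ) (L : ℝ) (hL : 0 ≤ L) :
    ((Finset.univ.filter fun r : Fin d → Bool =>
        Real.sqrt (2 * L * ∑ i, a i ^ 2) < |∑ i, signVec r i * a i|).card : ℝ)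
      ≤ 2 * 2 ^ d * Real.exp (-L) := by
  set S := ∑ i, a i ^ 2 with hS
  have hS0 : 0 ≤ S := Finset.sum_nonneg fun i _ => sq_nonneg _
  rcases hS0.eq_or_lt with h0 | hSpos
  · -- With zero variance the sum vanishes identically, so no pattern is in the tail.
    have ha : ∀ i, a i = 0 := fun i => by
      have := (Finset.sum_eq_zero_iff_of_nonneg (fun i _ => sq_nonneg (a i))).1
        (hS.symm.trans h0.symm) i (Finset.mem_univ i)
      exact pow_eq_zero_iff two_ne_zero |>.1 this
    simp [ha, ← h0]
    positivity
  -- The optimal exponent in the Chernoff bound.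
  set c := Real.sqrt (2 * L / S) with hc
  have hc0 : 0 ≤ c := Real.sqrt_nonneg _
  have hc2 : c ^ 2 * S = 2 * L := by
    rw [hc, Real.sq_sqrt (by positivity)]
    field_simp
  have hct : c * Real.sqrt (2 * L * S) = 2 * L := by
    rw [hc, ← Real.sqrt_mul (by positivity)]
    rw [show 2 * L / S * (2 * L * S) = (2 * L) ^ 2 by field_simp]
    exact Real.sqrt_sq (by positivity)
  set B := Finset.univ.filter fun r : Fin d → Bool =>
    Real.sqrt (2 * L * S) < |∑ i, signVec r i * a i|
  have markov : (B.card : ℝ) * Real.exp (2 * L)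
      ≤ ∑ r : Fin d → Bool, (Real.exp (c * ∑ i, signVec r i * a i)
          + Real.exp (-c * ∑ i, signVec r i * a i)) := by
    rw [← nsmul_eq_mul, ← Finset.sum_const]
    refine (Finset.sum_le_sum fun r hr => ?_).trans
      (Finset.sum_le_sum_of_subset_of_nonneg (Finset.subset_univ B)
        fun r _ _ => by positivity)
    have hr' := (Finset.mem_filter.1 hr).2
    set X := ∑ i, signVec r i * a i
    have h1 : 2 * L ≤ c * |X| := hct ▸ mul_le_mul_of_nonneg_left hr'.le hc0
    have hp := Real.exp_pos (c * X)
    have hn := Real.exp_pos (-c * X)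
    rcases abs_choice X with h | h <;> rw [h] at h1
    · linarith [Real.exp_le_exp.2 h1]
    · have h2 : 2 * L ≤ -c * X := by linarith
      linarith [Real.exp_le_exp.2 h2]
  have moments := add_le_add (sum_exp_signVec_le a c) (sum_exp_signVec_le a (-c))
  rw [← Finset.sum_add_distrib, ← hS, neg_sq, hc2, mul_div_cancel_left₀ L two_ne_zero]
    at moments
  have key := markov.trans moments
  have e1 : Real.exp (2 * L) = Real.exp L * Real.exp L := by rw [← Real.exp_add]; ring_nf
  rw [e1] at key
  rw [Real.exp_neg, ← div_eq_mul_inv, le_div_iff₀ (Real.exp_pos L)]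
  refine le_of_mul_le_mul_right ?_ (Real.exp_pos L)
  linarith

/-- Incoherence of the random Walsh–Hadamard rotation: if every entry of `H` has absolute
value `1/√d`, then with probability at least `1 − δ` over the random signs `r`, every
coordinate of `H · Diag(σ(r)) · w` is at most `√(2 log(4d/δ)/d) · ‖w‖`. -/
theorem random_hadamard_incoherence (d : ℕ) (hd : 1 ≤ d)
    (H : Matrix (Fin d) (Fin d) ℝ)
    (hH : ∀ i j, |H i j| = 1 / Real.sqrt d)
    (w : Fin d → ℝ) (δ : ℝ) (hδ0 : 0 < δ) (hδ1 : δ ≤ 1) :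
    (1 - δ) * 2 ^ d
      ≤ ((Finset.univ.filter fun r : Fin d → Bool =>
            ∀ j, |H.mulVec (fun i => signVec r i * w i) j|
                ≤ Real.sqrt (2 * Real.log (4 * d / δ) / d) *
                    Real.sqrt (∑ i, (w i) ^ 2)).card : ℝ) := by
  have hd0 : (0 : ℝ) < d := by exact_mod_cast hd
  set L := Real.log (4 * d / δ) with hLdef
  have hL : 0 ≤ L := by
    apply Real.log_nonneg
    rw [le_div_iff₀ hδ0]
    have : (1 : ℝ) ≤ d := by exact_mod_cast hd
    linarith
  have hexp : Real.exp (-L) = δ / (4 * d) := by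
    rw [Real.exp_neg, hLdef, Real.exp_log (by positivity), inv_div]
  set T := Real.sqrt (2 * L / d) * Real.sqrt (∑ i, (w i) ^ 2) with hT
  have tail : ∀ j, ((Finset.univ.filter fun r : Fin d → Bool =>
      T < |H.mulVec (fun i => signVec r i * w i) j|).card : ℝ)
        ≤ 2 * 2 ^ d * (δ / (4 * d)) := fun j => by
    have h := card_signVec_tail_le (fun i => H j i * w i) L hL
    have hsq : ∀ i, H j i ^ 2 = 1 / d := fun i => by
      rw [← sq_abs, hH, div_pow, Real.sq_sqrt hd0.le, one_pow]
    have hthr : Real.sqrt (2 * L * ∑ i, (H j i * w i) ^ 2) = T := by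
      simp only [mul_pow, hsq]
      rw [← Finset.mul_sum, hT, ← Real.sqrt_mul (by positivity)]
      congr 1
      ring
    have hX : ∀ r : Fin d → Bool, H.mulVec (fun i => signVec r i * w i) j
        = ∑ i, signVec r i * (H j i * w i) := fun r => by
      simp only [Matrix.mulVec, dotProduct]
      exact Finset.sum_congr rfl fun i _ => by ring
    simp only [hX]
    rw [hthr, hexp] at h
    exact h
  set G := Finset.univ.filter fun r : Fin d → Bool =>
    ∀ j, |H.mulVec (fun i => signVec r i * w i) j| ≤ T
  have hcover : (Finset.univ : Finset (Fin d → Bool)) ⊆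
      G ∪ Finset.univ.biUnion fun j => Finset.univ.filter fun r : Fin d → Bool =>
        T < |H.mulVec (fun i => signVec r i * w i) j| := fun r _ => by
    by_cases h : ∀ j, |H.mulVec (fun i => signVec r i * w i) j| ≤ T
    · exact Finset.mem_union_left _ (Finset.mem_filter.2 ⟨Finset.mem_univ r, h⟩)
    · obtain ⟨j, hj⟩ := not_forall.1 h
      exact Finset.mem_union_right _ (Finset.mem_biUnion.2
        ⟨j, Finset.mem_univ j, Finset.mem_filter.2 ⟨Finset.mem_univ r, not_le.1 hj⟩⟩)
  have hcard := (Finset.card_le_card hcover).trans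
    ((Finset.card_union_le _ _).trans (Nat.add_le_add_left Finset.card_biUnion_le _))
  have hcardR : (2 : ℝ) ^ d ≤ G.card + ∑ j : Fin d,
      ((Finset.univ.filter fun r : Fin d → Bool =>
        T < |H.mulVec (fun i => signVec r i * w i) j|).card : ℝ) := by
    have h2 : (Finset.univ : Finset (Fin d → Bool)).card = 2 ^ d := by simp
    rw [h2] at hcard
    exact_mod_cast hcard
  have hunion := Finset.sum_le_sum fun j (_ : j ∈ Finset.univ) => tail j
  rw [Finset.sum_const, Finset.card_univ, Fintype.card_fin, nsmul_eq_mul,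
    show (d : ℝ) * (2 * 2 ^ d * (δ / (4 * d))) = δ * 2 ^ d / 2 by field_simp; ring] at hunion
  have hpos : 0 < δ * 2 ^ d := by positivity
  linarith
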